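/- Let X = ⋃_α X_α be a metric space covered by a family of subsets {X_α}, and let ad, m_Y be functions defined for λ > 0 with values in ℕ. Suppose that for every λ > 0 there exist B(λ) ≥ λ, covers 𝒰_α of X_α (each with the subspace metric) by sets of diameter at most B(λ), with Lebesgue number greater than λ and multiplicity at most ad(λ), and a subset Y_λ ⊆ X such that the family { X_α \ Y_λ } is 3B(λ)-disjoint and Y_λ admits a uniformly bounded cover with Lebesgue number greater than λ and multiplicity at most m_Y(λ). Then ad_X ≼ λ ↦ max{ ad(λ), m_Y(λ) }, i.e. the asymptotic dimension function of X grows no faster than the maximum of ad and m_Y. -/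

import Mathlib

open Metric

namespace AsDim

/-- A family of subsets is a cover if its union is everything. -/
def IsCover {X : Type*} (𝒰 : Set (Set X)) : Prop := ⋃₀ 𝒰 = Set.univ

/-- A family of subsets of a metric space is uniformly bounded if there is a
common finite bound on the diameters of its members. -/
def UnifBounded {X : Type*} [MetricSpace X] (𝒰 : Set (Set X)) : Prop :=
  ∃ B : ℝ, 0 ≤ B ∧ ∀ U ∈ 𝒰, EMetric.diam U ≤ ENNReal.ofReal B

/-- A family has Lebesgue number at least `lam` if every subset of diameter at most
`lam` is contained in some member of the family. -/
def LebesgueGE {X : Type*} [MetricSpace X] (𝒰 : Set (Set X)) (lam : ℝ) : Prop :=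
  ∀ A : Set X, EMetric.diam A ≤ ENNReal.ofReal lam → ∃ U ∈ 𝒰, A ⊆ U

/-- The multiplicity of a family: the supremum over points of the number of
members containing that point. -/
noncomputable def mult {X : Type*} (𝒰 : Set (Set X)) : ℕ∞ :=
  ⨆ x : X, {U | U ∈ 𝒰 ∧ x ∈ U}.encard

/-- The asymptotic dimension function:
`ad_X(lam) = min { mult 𝒰 : 𝒰 a uniformly bounded cover with Lebesgue number ≥ lam } - 1`. -/
noncomputable def adFun (X : Type*) [MetricSpace X] (lam : ℝ) : ℕ∞ :=
  sInf {m : ℕ∞ | ∃ 𝒰 : Set (Set X),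
    IsCover 𝒰 ∧ UnifBounded 𝒰 ∧ LebesgueGE 𝒰 lam ∧ m = mult 𝒰} - 1

/-- `f ≼ g` : there is `k ∈ ℕ` with `f x ≤ k * g (k*x+k) + k` for all `x > 0`. -/
def GrowLE (f g : ℝ → ℕ∞) : Prop :=
  ∃ k : ℕ, ∀ x : ℝ, 0 < x → f x ≤ (k : ℕ∞) * g ((k : ℝ) * x + (k : ℝ)) + (k : ℕ∞)

/-- `f ≈ g` : same growth. -/
def GrowEquiv (f g : ℝ → ℕ∞) : Prop := GrowLE f g ∧ GrowLE g f

/-- `asdim X ≤ n`. -/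
def AsdimLE (X : Type*) [MetricSpace X] (n : ℕ) : Prop :=
  ∀ lam : ℝ, 0 < lam → ∃ 𝒰 : Set (Set X),
    IsCover 𝒰 ∧ UnifBounded 𝒰 ∧ LebesgueGE 𝒰 lam ∧ mult 𝒰 ≤ (n : ℕ∞) + 1

/-- Bounded geometry (as a discrete space): uniform finite bound on the
cardinality of balls of each radius. -/
def BoundedGeometry (X : Type*) [MetricSpace X] : Prop :=
  ∀ r : ℝ, 0 < r → ∃ c : ℕ, ∀ x : X, (Metric.closedBall x r).encard ≤ (c : ℕ∞)

/-- `(lam, eps, C)`-quasi-isometry. -/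
def IsQuasiIsometry {X Y : Type*} [MetricSpace X] [MetricSpace Y]
    (lam eps C : ℝ) (f : X → Y) : Prop :=
  1 ≤ lam ∧ 0 ≤ eps ∧ 0 ≤ C ∧
  (∀ x x' : X, (1 / lam) * dist x x' - eps ≤ dist (f x) (f x') ∧
      dist (f x) (f x') ≤ lam * dist x x' + eps) ∧
  (∀ y : Y, ∃ x : X, dist y (f x) ≤ C)

/-- Two metric spaces are quasi-isometric if some quasi-isometry exists. -/
def QuasiIsometric (X Y : Type*) [MetricSpace X] [MetricSpace Y] : Prop :=
  ∃ (lam eps C : ℝ) (f : X → Y), IsQuasiIsometry lam eps C f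

/-- Word distance with respect to a generating set `S`. -/
noncomputable def wordDist {Γ : Type*} [Group Γ] (S : Set Γ) (g h : Γ) : ℕ :=
  sInf {n : ℕ | ∃ l : List Γ, (∀ x ∈ l, x ∈ S) ∧ l.length = n ∧ l.prod = g⁻¹ * h}

/-- The metric on the group `Γ` is the word metric of the finite symmetric
generating set `S`. -/
def IsWordMetric {Γ : Type*} [Group Γ] [MetricSpace Γ] (S : Finset Γ) : Prop :=
  (∀ s ∈ S, s⁻¹ ∈ S) ∧ Subgroup.closure (S : Set Γ) = ⊤ ∧
  ∀ g h : Γ, dist g h = wordDist (S : Set Γ) g h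

end AsDim

/-!
Write `Y` for the exceptional set attached to a scale `λ ≥ 4r`. Off `Y` the pieces are more than `r`
apart, so a set of diameter at most `r` that misses `Y` lies in one piece, and the covers of the
pieces assemble into a cover of `Yᶜ` without raising the multiplicity. A set of diameter at most
`r` that meets `Y` at `q` lies in the `r`-ball about `q`; replacing each member `V` of the cover of
`Y` by the `r`-neighbourhood of its `2r`-interior catches all such sets, again without raising the
multiplicity. The multiplicities of the two families add up to at most twice their maximum.
-/

namespace AsDim

open scoped NNReal ENNReal Function

section Multiplicity

variable {X Y ι : Type*}

theorem encard_le_mult (𝒰 : Set (Set X)) (x : X) : {U | U ∈ 𝒰 ∧ x ∈ U}.encard ≤ mult 𝒰 :=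
  le_iSup (fun x => {U | U ∈ 𝒰 ∧ x ∈ U}.encard) x

theorem mult_union_le (𝒰 𝒱 : Set (Set X)) : mult (𝒰 ∪ 𝒱) ≤ mult 𝒰 + mult 𝒱 := by
  refine iSup_le fun x => ?_
  have hsplit : {W | W ∈ 𝒰 ∪ 𝒱 ∧ x ∈ W} = {U | U ∈ 𝒰 ∧ x ∈ U} ∪ {V | V ∈ 𝒱 ∧ x ∈ V} := by
    ext W
    exact or_and_right
  rw [hsplit]
  exact (Set.encard_union_le _ _).trans
    (add_le_add (encard_le_mult 𝒰 x) (encard_le_mult 𝒱 x))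

theorem mult_iUnion_le_of_pairwise_disjoint {s : ι → Set X} {𝒰 : ι → Set (Set X)} {n : ℕ∞}
    (hs : Pairwise (Disjoint on s)) (hsub : ∀ i, ∀ U ∈ 𝒰 i, U ⊆ s i)
    (hn : ∀ i, mult (𝒰 i) ≤ n) : mult (⋃ i, 𝒰 i) ≤ n := by
  refine iSup_le fun x => ?_
  obtain hempty | ⟨U, hU, hxU⟩ := Set.eq_empty_or_nonempty {U | U ∈ ⋃ i, 𝒰 i ∧ x ∈ U}
  · simp only [hempty, Set.encard_empty, zero_le]
  obtain ⟨i, hUi⟩ := Set.mem_iUnion.1 hU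
  have hle : {V | V ∈ ⋃ j, 𝒰 j ∧ x ∈ V} ⊆ {V | V ∈ 𝒰 i ∧ x ∈ V} := by
    rintro V ⟨hV, hxV⟩
    obtain ⟨j, hVj⟩ := Set.mem_iUnion.1 hV
    obtain rfl : i = j :=
      hs.eq (Set.not_disjoint_iff.2 ⟨x, hsub i U hUi hxU, hsub j V hVj hxV⟩)
    exact ⟨hVj, hxV⟩
  exact (Set.encard_le_encard hle).trans ((encard_le_mult (𝒰 i) x).trans (hn i))

theorem mult_image_le {F : Set Y → Set X} {𝒱 : Set (Set Y)}
    (hF : ∀ x, ∀ V ∈ 𝒱, x ∈ F V → ∃ y, ∀ W ∈ 𝒱, x ∈ F W → y ∈ W) :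
    mult (F '' 𝒱) ≤ mult 𝒱 := by
  refine iSup_le fun x => ?_
  obtain hempty | ⟨_, ⟨V, hV, rfl⟩, hxV⟩ := Set.eq_empty_or_nonempty {U | U ∈ F '' 𝒱 ∧ x ∈ U}
  · simp only [hempty, Set.encard_empty, zero_le]
  obtain ⟨y, hy⟩ := hF x V hV hxV
  have hle : {U | U ∈ F '' 𝒱 ∧ x ∈ U} ⊆ F '' {W | W ∈ 𝒱 ∧ y ∈ W} := by
    rintro _ ⟨⟨W, hW, rfl⟩, hxW⟩
    exact ⟨W, ⟨hW, hy W hW hxW⟩, rfl⟩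
  exact (Set.encard_le_encard hle).trans
    ((Set.encard_image_le _ _).trans (encard_le_mult 𝒱 y))

theorem mult_insert_empty (𝒰 : Set (Set X)) : mult (insert ∅ 𝒰) = mult 𝒰 := by
  refine iSup_congr fun x => congrArg Set.encard (Set.ext fun U => and_congr_left fun hxU => ?_)
  exact Set.mem_insert_iff.trans (or_iff_right (Set.nonempty_of_mem hxU).ne_empty)

theorem mult_image_image_le {f : X → Y} (hf : f.Injective) (𝒰 : Set (Set X)) :
    mult (Set.image f '' 𝒰) ≤ mult 𝒰 := by
  refine mult_image_le ?_
  rintro _ _ _ ⟨x, _, rfl⟩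
  exact ⟨x, fun _ _ => hf.mem_set_image.1⟩

theorem mult_image_preimage_le (f : X → Y) (𝒱 : Set (Set Y)) :
    mult (Set.preimage f '' 𝒱) ≤ mult 𝒱 :=
  mult_image_le fun x _ _ _ => ⟨f x, fun _ _ => id⟩

end Multiplicity

section LebesgueNumber

variable {X Y : Type*} [MetricSpace X] [MetricSpace Y] {lam : ℝ}

theorem LebesgueGE.mono {𝒰 : Set (Set X)} {L : ℝ} (h : LebesgueGE 𝒰 L) (hle : lam ≤ L) :
    LebesgueGE 𝒰 lam :=
  fun A hA => h A (hA.trans (ENNReal.ofReal_le_ofReal hle))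

theorem LebesgueGE.isCover {𝒰 : Set (Set X)} (h : LebesgueGE 𝒰 lam) : IsCover 𝒰 := by
  refine Set.eq_univ_of_forall fun x => ?_
  obtain ⟨U, hU, hxU⟩ := h {x} (ediam_singleton.trans_le zero_le)
  exact ⟨U, hU, hxU rfl⟩

theorem LebesgueGE.image_preimage {f : Y → X} (hf : Isometry f) {𝒰 : Set (Set X)}
    (h : LebesgueGE 𝒰 lam) : LebesgueGE (Set.preimage f '' 𝒰) lam := by
  intro A hA
  obtain ⟨U, hU, hAU⟩ := h (f '' A) ((hf.ediam_image A).trans_le hA)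
  exact ⟨f ⁻¹' U, Set.mem_image_of_mem _ hU, Set.image_subset_iff.1 hAU⟩

theorem LebesgueGE.exists_subset_image_val {s A : Set X} {𝒰 : Set (Set s)}
    (h : LebesgueGE 𝒰 lam) (hA : ediam A ≤ ENNReal.ofReal lam) (hAs : A ⊆ s) :
    ∃ U ∈ 𝒰, A ⊆ Subtype.val '' U := by
  have himage : Subtype.val '' (Subtype.val ⁻¹' A : Set s) = A :=
    Subtype.image_preimage_coe s A ▸ Set.inter_eq_right.2 hAs
  obtain ⟨U, hU, hAU⟩ := h (Subtype.val ⁻¹' A)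
    ((isometry_subtype_coe.ediam_image _).symm.trans_le (himage.symm ▸ hA))
  exact ⟨U, hU, himage ▸ Set.image_mono hAU⟩

end LebesgueNumber

section Enlargement

variable {X : Type*} [MetricSpace X] {Y : Set X} {r : ℝ}

/-- The closed `r`-neighbourhood in `X` of the `2r`-interior of a subset `V` of a subspace `Y`.
Shrinking before thickening keeps the multiplicity of a family of such `V` from growing. -/
def enlargement (r : ℝ) (V : Set Y) : Set X :=
  {z | ∃ y : Y, closedBall y (2 * r) ⊆ V ∧ dist z y ≤ r}

theorem ediam_enlargement_le (V : Set Y) :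
    ediam (enlargement r V) ≤ ediam V + 2 * ENNReal.ofReal r := by
  refine ediam_le ?_
  rintro z ⟨y, hy, hzy⟩ z' ⟨y', hy', hzy'⟩
  have hr : 0 ≤ r := dist_nonneg.trans hzy
  have hyV : y ∈ V := hy (mem_closedBall_self (by positivity))
  have hyV' : y' ∈ V := hy' (mem_closedBall_self (by positivity))
  calc edist z z'
      ≤ edist z y + edist y y' + edist (y' : X) z' := edist_triangle4 z y y' z'
    _ ≤ ENNReal.ofReal r + ediam V + ENNReal.ofReal r := by
        gcongr
        · exact (edist_le_ofReal hr).2 hzy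
        · exact edist_le_ediam_of_mem hyV hyV'
        · exact edist_comm z' (y' : X) ▸ (edist_le_ofReal hr).2 hzy'
    _ = ediam V + 2 * ENNReal.ofReal r := by ring

theorem mult_image_enlargement_le (r : ℝ) (𝒱 : Set (Set Y)) :
    mult (enlargement r '' 𝒱) ≤ mult 𝒱 := by
  refine mult_image_le ?_
  rintro z _ _ ⟨y, _, hzy⟩
  refine ⟨y, ?_⟩
  rintro W _ ⟨w, hw, hzw⟩
  refine hw (mem_closedBall.2 ?_)
  calc dist (y : X) w ≤ dist z y + dist z w := dist_triangle_left _ _ z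
    _ ≤ 2 * r := by linarith

theorem LebesgueGE.exists_subset_enlargement {𝒱 : Set (Set Y)} (h : LebesgueGE 𝒱 (4 * r))
    (hr : 0 ≤ r) {A : Set X} (hA : ediam A ≤ ENNReal.ofReal r) (hAY : (A ∩ Y).Nonempty) :
    ∃ V ∈ 𝒱, A ⊆ enlargement r V := by
  obtain ⟨q, hqA, hqY⟩ := hAY
  have hball : ediam (closedBall (⟨q, hqY⟩ : Y) (2 * r)) ≤ ENNReal.ofReal (4 * r) :=
    calc ediam (closedBall (⟨q, hqY⟩ : Y) (2 * r))
        = ediam (closedEBall (⟨q, hqY⟩ : Y) (ENNReal.ofReal (2 * r))) := by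
          rw [closedEBall_ofReal (by positivity)]
      _ ≤ 2 * ENNReal.ofReal (2 * r) := ediam_closedEBall_le
      _ = ENNReal.ofReal (4 * r) := by
          rw [← ENNReal.ofReal_ofNat 2, ← ENNReal.ofReal_mul zero_le_two]
          ring_nf
  obtain ⟨V, hV, hqV⟩ := h _ hball
  exact ⟨V, hV, fun z hz =>
    ⟨⟨q, hqY⟩, hqV, (edist_le_ofReal hr).1 (edist_le_of_ediam_le hz hqA hA)⟩⟩

end Enlargement

/-- `X` has a family of subsets of diameter at most `B`, with Lebesgue number at least `lam` and
multiplicity at most `n`; such a family is a cover by `LebesgueGE.isCover`. Bounding the diameters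
by an explicit `B` expresses that the bound is uniform over a collection of spaces. -/
def HasControlledCover (X : Type*) [MetricSpace X] (B : ℝ≥0) (lam : ℝ) (n : ℕ∞) : Prop :=
  ∃ 𝒰 : Set (Set X), (∀ U ∈ 𝒰, ediam U ≤ B) ∧ LebesgueGE 𝒰 lam ∧ mult 𝒰 ≤ n

namespace HasControlledCover

variable {X Y : Type*} [MetricSpace X] [MetricSpace Y] {B : ℝ≥0} {lam : ℝ} {n : ℕ∞}

theorem mono {L : ℝ} (h : HasControlledCover X B L n) (hle : lam ≤ L) :
    HasControlledCover X B lam n :=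
  let ⟨𝒰, hdiam, hleb, hmult⟩ := h
  ⟨𝒰, hdiam, hleb.mono hle, hmult⟩

theorem of_isometry {f : Y → X} (hf : Isometry f) (h : HasControlledCover X B lam n) :
    HasControlledCover Y B lam n := by
  obtain ⟨𝒰, hdiam, hleb, hmult⟩ := h
  refine ⟨Set.preimage f '' 𝒰, Set.forall_mem_image.2 fun U hU => ?_, hleb.image_preimage hf,
    (mult_image_preimage_le f 𝒰).trans hmult⟩
  calc ediam (f ⁻¹' U) = ediam (f '' (f ⁻¹' U)) := (hf.ediam_image _).symm
    _ ≤ ediam U := ediam_mono (Set.image_preimage_subset f U)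
    _ ≤ B := hdiam U hU

theorem adFun_le (h : HasControlledCover X B lam n) : adFun X lam ≤ n := by
  obtain ⟨𝒰, hdiam, hleb, hmult⟩ := h
  have hbdd : UnifBounded 𝒰 :=
    ⟨B, B.2, fun U hU => (hdiam U hU).trans_eq ENNReal.ofReal_coe_nnreal.symm⟩
  calc adFun X lam ≤ mult 𝒰 :=
        tsub_le_self.trans (sInf_le ⟨𝒰, hleb.isCover, hbdd, hleb, rfl⟩)
    _ ≤ n := hmult

end HasControlledCover

section Union

variable {X : Type*} [MetricSpace X] {B C : ℝ≥0} {lam r : ℝ} {m n : ℕ∞}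

theorem exists_superset_mem_of_separated {𝒮 : Set (Set X)} (hcover : ⋃₀ 𝒮 = Set.univ)
    (hsep : 𝒮.Pairwise fun S T => ∀ x ∈ S, ∀ y ∈ T, ENNReal.ofReal lam < edist x y)
    {A : Set X} (hA : ediam A ≤ ENNReal.ofReal lam) (hne : A.Nonempty) : ∃ S ∈ 𝒮, A ⊆ S := by
  obtain ⟨p, hp⟩ := hne
  obtain ⟨S, hS, hpS⟩ := Set.sUnion_eq_univ_iff.1 hcover p
  refine ⟨S, hS, fun z hz => ?_⟩
  obtain ⟨T, hT, hzT⟩ := Set.sUnion_eq_univ_iff.1 hcover z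
  obtain rfl : S = T := by
    by_contra hST
    exact (hsep hS hT hST p hpS z hzT).not_ge (edist_le_of_ediam_le hp hz hA)
  exact hzT

theorem hasControlledCover_of_separated {𝒮 : Set (Set X)} (hcover : ⋃₀ 𝒮 = Set.univ)
    (hsep : 𝒮.Pairwise fun S T => ∀ x ∈ S, ∀ y ∈ T, ENNReal.ofReal lam < edist x y)
    (h : ∀ S : 𝒮, HasControlledCover S B lam n) : HasControlledCover X B lam n := by
  choose 𝒰 hdiam hleb hmult using h
  have hdisj : Pairwise (Disjoint on fun S : 𝒮 => (S : Set X)) := fun S T hST =>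
    Set.disjoint_left.2 fun x hxS hxT =>
      not_lt_zero (edist_self x ▸ hsep S.2 T.2 (Subtype.coe_ne_coe.2 hST) x hxS x hxT)
  -- The empty set has to be contained in a member even when there are no pieces at all.
  refine ⟨insert ∅ (⋃ S, Set.image Subtype.val '' 𝒰 S), ?_, fun A hA => ?_, ?_⟩
  · refine Set.forall_mem_insert.2 ⟨ediam_empty.trans_le zero_le, fun W hW => ?_⟩
    obtain ⟨S, U, hU, rfl⟩ := Set.mem_iUnion.1 hW
    exact (isometry_subtype_coe.ediam_image U).trans_le (hdiam S U hU)
  · obtain rfl | hne := A.eq_empty_or_nonempty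
    · exact ⟨∅, Set.mem_insert _ _, subset_rfl⟩
    obtain ⟨S, hS, hAS⟩ := exists_superset_mem_of_separated hcover hsep hA hne
    obtain ⟨U, hU, hAU⟩ := (hleb ⟨S, hS⟩).exists_subset_image_val hA hAS
    exact ⟨_, Or.inr (Set.mem_iUnion.2 ⟨⟨S, hS⟩, U, hU, rfl⟩), hAU⟩
  · rw [mult_insert_empty]
    refine mult_iUnion_le_of_pairwise_disjoint hdisj (fun S => Set.forall_mem_image.2 fun U _ => ?_)
      fun S => (mult_image_image_le Subtype.val_injective (𝒰 S)).trans (hmult S)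
    exact Subtype.coe_image_subset (S : Set X) U

theorem hasControlledCover_of_subset_of_compl {Y : Set X} (hr : 0 ≤ r)
    (hY : HasControlledCover Y C (4 * r) m) (hYc : HasControlledCover ↥Yᶜ B r n) :
    HasControlledCover X (max B (C + 2 * r.toNNReal)) r (n + m) := by
  obtain ⟨𝒱, hVdiam, hVleb, hVmult⟩ := hY
  obtain ⟨𝒰, hUdiam, hUleb, hUmult⟩ := hYc
  refine ⟨Set.image Subtype.val '' 𝒰 ∪ enlargement r '' 𝒱, ?_, fun A hA => ?_, ?_⟩
  · rintro _ (⟨U, hU, rfl⟩ | ⟨V, hV, rfl⟩)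
    · rw [isometry_subtype_coe.ediam_image]
      exact (hUdiam U hU).trans (mod_cast le_max_left _ _)
    · calc ediam (enlargement r V) ≤ ediam V + 2 * ENNReal.ofReal r := ediam_enlargement_le V
        _ ≤ C + 2 * ENNReal.ofReal r := by gcongr; exact hVdiam V hV
        _ = ((C + 2 * r.toNNReal : ℝ≥0) : ℝ≥0∞) := by push_cast; rfl
        _ ≤ _ := mod_cast le_max_right _ _
  · by_cases hAY : (A ∩ Y).Nonempty
    · obtain ⟨V, hV, hAV⟩ := hVleb.exists_subset_enlargement hr hA hAY
      exact ⟨_, Or.inr ⟨V, hV, rfl⟩, hAV⟩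
    · have hAYc : A ⊆ Yᶜ := Set.disjoint_iff_inter_eq_empty.2
        (Set.not_nonempty_iff_eq_empty.1 hAY) |>.subset_compl_right
      obtain ⟨U, hU, hAU⟩ := hUleb.exists_subset_image_val hA hAYc
      exact ⟨_, Or.inl ⟨U, hU, rfl⟩, hAU⟩
  · exact (mult_union_le _ _).trans (add_le_add
      ((mult_image_image_le Subtype.val_injective 𝒰).trans hUmult)
      ((mult_image_enlargement_le r 𝒱).trans hVmult))

theorem hasControlledCover_compl_of_separated {ι : Type*} {s : ι → Set X} {Y : Set X}
    (hcover : ⋃ i, s i = Set.univ)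
    (hsep : ∀ i j, s i \ Y ≠ s j \ Y →
      ∀ x ∈ s i \ Y, ∀ y ∈ s j \ Y, ENNReal.ofReal lam < edist x y)
    (h : ∀ i, HasControlledCover (s i) B lam n) : HasControlledCover ↥Yᶜ B lam n := by
  let piece (i : ι) : Set ↥Yᶜ := Subtype.val ⁻¹' s i
  refine hasControlledCover_of_separated (𝒮 := Set.range piece) ?_ ?_ ?_
  · rw [Set.sUnion_range, ← Set.preimage_iUnion, hcover, Set.preimage_univ]
  · rintro _ ⟨i, rfl⟩ _ ⟨j, rfl⟩ hne p hp q hq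
    refine hsep i j (fun heq => hne ?_) p ⟨hp, p.2⟩ q ⟨hq, q.2⟩
    rw [Subtype.preimage_coe_eq_preimage_coe_iff, Set.inter_comm, ← Set.sdiff_eq, heq,
      Set.sdiff_eq, Set.inter_comm]
  · rintro ⟨_, i, rfl⟩
    exact (h i).of_isometry (f := (s i).restrictPreimage Subtype.val) fun _ _ => rfl

end Union

theorem adFun_union_general {X : Type*} [MetricSpace X] {ι : Type*} (s : ι → Set X)
    (hcover : ⋃ i, s i = Set.univ) (ad mY : ℝ → ℕ∞)
    (h : ∀ lam : ℝ, 0 < lam → ∃ B : ℝ≥0, (∀ i, HasControlledCover (s i) B lam (ad lam)) ∧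
      ∃ Y : Set X, (∀ i j, s i \ Y ≠ s j \ Y → ∀ x ∈ s i \ Y, ∀ y ∈ s j \ Y, lam ≤ dist x y) ∧
        ∃ C : ℝ≥0, HasControlledCover Y C lam (mY lam)) :
    GrowLE (adFun X) fun lam => max (ad lam) (mY lam) := by
  refine ⟨4, fun r hr => ?_⟩
  set lam : ℝ := (4 : ℕ) * r + (4 : ℕ) with hlam
  push_cast at hlam
  obtain ⟨B, hs, Y, hsep, C, hY⟩ := h lam (by linarith)
  have hYc : HasControlledCover ↥Yᶜ B r (ad lam) := by
    refine hasControlledCover_compl_of_separated hcover (fun i j hne x hx y hy => ?_)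
      fun i => (hs i).mono (by linarith)
    rw [edist_dist, ENNReal.ofReal_lt_ofReal_iff_of_nonneg hr.le]
    linarith [hsep i j hne x hx y hy]
  calc adFun X r ≤ ad lam + mY lam :=
        (hasControlledCover_of_subset_of_compl hr.le (hY.mono (by linarith)) hYc).adFun_le
    _ ≤ max (ad lam) (mY lam) + max (ad lam) (mY lam) :=
        add_le_add (le_max_left _ _) (le_max_right _ _)
    _ = 2 * max (ad lam) (mY lam) := (two_mul _).symm
    _ ≤ (4 : ℕ) * max (ad lam) (mY lam) := by gcongr; norm_num
    _ ≤ (4 : ℕ) * max (ad lam) (mY lam) + (4 : ℕ) := le_self_add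

/-- Union theorem for the asymptotic dimension function. -/
theorem adFun_union {X : Type*} [MetricSpace X] {ι : Type*} (Xa : ι → Set X)
    (hXcover : (⋃ i, Xa i) = Set.univ)
    (ad mY : ℝ → ℕ)
    (h : ∀ lam : ℝ, 0 < lam → ∃ B : ℝ, lam ≤ B ∧
      (∀ i : ι, ∃ 𝒰 : Set (Set ↥(Xa i)), IsCover 𝒰 ∧
        (∀ U ∈ 𝒰, EMetric.diam U ≤ ENNReal.ofReal B) ∧
        (∃ L : ℝ, lam < L ∧ LebesgueGE 𝒰 L) ∧ mult 𝒰 ≤ (ad lam : ℕ∞)) ∧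
      (∃ Y : Set X,
        (∀ i j : ι, Xa i \ Y ≠ Xa j \ Y →
          ∀ x ∈ Xa i \ Y, ∀ y ∈ Xa j \ Y, 3 * B ≤ dist x y) ∧
        (∃ 𝒱 : Set (Set ↥Y), IsCover 𝒱 ∧ UnifBounded 𝒱 ∧
          (∃ L : ℝ, lam < L ∧ LebesgueGE 𝒱 L) ∧ mult 𝒱 ≤ (mY lam : ℕ∞)))) :
    GrowLE (adFun X) (fun lam => (max (ad lam) (mY lam) : ℕ∞)) := by
  refine adFun_union_general Xa hXcover _ _ fun lam hlam => ?_
  obtain ⟨B, hB, hXa, Y, hsep, 𝒱, -, ⟨C, -, hC⟩, ⟨L, hL, hleb⟩, hmult⟩ := h lam hlam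
  exact ⟨B.toNNReal, fun i =>
      let ⟨𝒰, _, hdiam, ⟨_, hL', hleb'⟩, hmult'⟩ := hXa i
      ⟨𝒰, hdiam, hleb'.mono hL'.le, hmult'⟩,
    Y, fun i j hne x hx y hy => by linarith [hsep i j hne x hx y hy],
    C.toNNReal, 𝒱, hC, hleb.mono hL.le, hmult⟩

end AsDim
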